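/- For all p, q ∈ {1,…,N}: (i) ∫_{∂B₁} Σ_{i,j=1}^N H_{ij}(y) (∂_q H_{ij})(y) y_p dσ(y) = (|S^{N−1}|/(N(N+2))) Σ_{i,j,k=1}^N (W_{ikjp}+W_{ipjk})(W_{ikjq}+W_{iqjk}); and (ii) ∫_{∂B₁} Σ_{i,j,k,ℓ=1}^N ((∂_k∂_ℓ H_{ij})(y))² y_p y_q dσ(y) = (|S^{N−1}|/N) (Σ_{i,j,k,ℓ=1}^N (W_{ikjℓ}+W_{iℓjk})²) δ_{pq}. -/

import Mathlib

open scoped BigOperators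
open MeasureTheory

noncomputable section

/-- The partial derivative `∂f/∂y_i` of a function on Euclidean space. -/
def pd (N : ℕ) (i : Fin N) (f : EuclideanSpace ℝ (Fin N) → ℝ) :
    EuclideanSpace ℝ (Fin N) → ℝ :=
  fun y => fderiv ℝ f y (EuclideanSpace.single i 1)

/-- `H_{ij}(y) = Σ_{p,q} W_{ipjq} y_p y_q`. -/
def Hmat (N : ℕ) (W : Fin N → Fin N → Fin N → Fin N → ℝ) (i j : Fin N)
    (y : EuclideanSpace ℝ (Fin N)) : ℝ :=
  ∑ p : Fin N, ∑ q : Fin N, W i p j q * y p * y q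

/-- The surface measure on the unit sphere `S^{N-1} ⊂ ℝ^N`. -/
def sphereMeasure (N : ℕ) :
    Measure (Metric.sphere (0 : EuclideanSpace ℝ (Fin N)) 1) :=
  (volume : Measure (EuclideanSpace ℝ (Fin N))).toSphere

/-- `|S^{N-1}|`, the total surface measure of the unit sphere in `ℝ^N`. -/
def sphereArea (N : ℕ) : ℝ := (sphereMeasure N Set.univ).toReal

/-- The action of a linear isometry on the unit sphere. -/
def sphAct (N : ℕ) (g : EuclideanSpace ℝ (Fin N) ≃ₗᵢ[ℝ] EuclideanSpace ℝ (Fin N))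
    (y : Metric.sphere (0 : EuclideanSpace ℝ (Fin N)) 1) :
    Metric.sphere (0 : EuclideanSpace ℝ (Fin N)) 1 :=
  ⟨g y, by have := y.2; simp only [mem_sphere_zero_iff_norm] at *; simp [this]⟩

lemma sphAct_cont (N : ℕ) (g : EuclideanSpace ℝ (Fin N) ≃ₗᵢ[ℝ] EuclideanSpace ℝ (Fin N)) :
    Continuous (sphAct N g) :=
  Continuous.subtype_mk (g.continuous.comp continuous_subtype_val) _

lemma sphAct_mp (N : ℕ) (g : EuclideanSpace ℝ (Fin N) ≃ₗᵢ[ℝ] EuclideanSpace ℝ (Fin N)) :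
    MeasurePreserving (sphAct N g) (sphereMeasure N) (sphereMeasure N) := by
  refine ⟨(sphAct_cont N g).measurable, ?_⟩
  ext s hs
  rw [Measure.map_apply (sphAct_cont N g).measurable hs]
  unfold sphereMeasure
  rw [Measure.toSphere_apply' _ hs,
    Measure.toSphere_apply' _ ((sphAct_cont N g).measurable hs)]
  congr 1
  symm
  rw [← (show MeasurePreserving g.toMeasurableEquiv volume volume from
    g.measurePreserving).measure_preimage_equiv]
  congr 1
  ext x
  change g x ∈ (_ : Set (EuclideanSpace ℝ (Fin N))) ↔ _
  simp only [Set.mem_smul, Set.mem_image, Set.mem_preimage]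
  rw [iff_comm]
  constructor
  · rintro ⟨r, hr, _, ⟨y, hy, rfl⟩, rfl⟩
    exact ⟨r, hr, _, ⟨_, hy, rfl⟩, by simp [sphAct]⟩
  · rintro ⟨r, hr, _, ⟨y, hy, rfl⟩, hx⟩
    refine ⟨r, hr, _, ⟨sphAct N g.symm y, ?_, rfl⟩, ?_⟩
    · have : sphAct N g (sphAct N g.symm y) = y := by
        ext1; simp [sphAct]
      simpa [this] using hy
    · apply g.injective
      simpa [sphAct] using hx

instance sphFin (N : ℕ) : IsFiniteMeasure (sphereMeasure N) := by
  unfold sphereMeasure; infer_instance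

lemma sph_int (N : ℕ) {f : Metric.sphere (0 : EuclideanSpace ℝ (Fin N)) 1 → ℝ}
    (hf : Continuous f) : Integrable f (sphereMeasure N) :=
  hf.integrable_of_hasCompactSupport (HasCompactSupport.of_compactSpace f)

open scoped RealInnerProductSpace

lemma pow_moment (N : ℕ) (hN : 5 ≤ N) (n : ℕ) :
    ∃ C : ℝ, ∀ v : EuclideanSpace ℝ (Fin N),
      ∫ y : Metric.sphere (0 : EuclideanSpace ℝ (Fin N)) 1,
        (⟪v, (y : EuclideanSpace ℝ (Fin N))⟫) ^ n ∂(sphereMeasure N) = C * ‖v‖ ^ n := by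
  set e : EuclideanSpace ℝ (Fin N) := EuclideanSpace.single ⟨0, by omega⟩ 1 with he
  have hen : ‖e‖ = 1 := by simp [he]
  refine ⟨∫ y : Metric.sphere (0 : EuclideanSpace ℝ (Fin N)) 1,
        (⟪e, (y : EuclideanSpace ℝ (Fin N))⟫) ^ n ∂(sphereMeasure N), fun v => ?_⟩
  have hn : ‖‖v‖ • e‖ = ‖v‖ := by simp [norm_smul, hen]
  set g := (Submodule.span ℝ {‖v‖ • e - v})ᗮ.reflection with hg
  have hgv : g (‖v‖ • e) = v := Submodule.reflection_sub hn
  have hmp := sphAct_mp N g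
  rw [← integral_mul_const]
  rw [← hmp.map_eq, integral_map (sphAct_cont N g).aemeasurable
    (Continuous.aestronglyMeasurable (by fun_prop)), hmp.map_eq]
  congr 1
  ext y
  have : ⟪v, g y⟫ = ‖v‖ * ⟪e, (y : EuclideanSpace ℝ (Fin N))⟫ := by
    conv_lhs => rw [← hgv]
    rw [g.inner_map_map, real_inner_smul_left]
  simp only [sphAct]
  rw [this]; ring

abbrev Sph (N : ℕ) := Metric.sphere (0 : EuclideanSpace ℝ (Fin N)) 1

lemma sum_sq_sph (N : ℕ) (y : Sph N) : ∑ i, (y : EuclideanSpace ℝ (Fin N)) i ^ 2 = 1 := by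
  have h := y.2
  rw [mem_sphere_zero_iff_norm] at h
  have := EuclideanSpace.real_norm_sq_eq (y : EuclideanSpace ℝ (Fin N))
  rw [← this, h]; norm_num

lemma int_one (N : ℕ) : ∫ _ : Sph N, (1 : ℝ) ∂(sphereMeasure N) = sphereArea N := by
  simp [sphereArea, Measure.real]

lemma moment2 (N : ℕ) (hN : 5 ≤ N) (a b : Fin N) :
    ∫ y : Sph N, (y : EuclideanSpace ℝ (Fin N)) a * (y : EuclideanSpace ℝ (Fin N)) b
      ∂(sphereMeasure N) = sphereArea N / N * (if a = b then 1 else 0) := by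
  obtain ⟨C, hC⟩ := pow_moment N hN 2
  have key : ∀ a b : Fin N, ∫ y : Sph N, (y : EuclideanSpace ℝ (Fin N)) a *
      (y : EuclideanSpace ℝ (Fin N)) b ∂(sphereMeasure N) = C * (if a = b then 1 else 0) := by
    intro a b
    have h1 := hC (EuclideanSpace.single a 1 + EuclideanSpace.single b 1)
    have h2 := hC (EuclideanSpace.single a 1 - EuclideanSpace.single b 1)
    have h3 : ∫ y : Sph N, (y : EuclideanSpace ℝ (Fin N)) a *
      (y : EuclideanSpace ℝ (Fin N)) b ∂(sphereMeasure N) =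
      ∫ y : Sph N, (1/4 : ℝ) * ((⟪EuclideanSpace.single a 1 + EuclideanSpace.single b 1,
        (y : EuclideanSpace ℝ (Fin N))⟫) ^ 2 -
        (⟪EuclideanSpace.single a 1 - EuclideanSpace.single b 1,
        (y : EuclideanSpace ℝ (Fin N))⟫) ^ 2) ∂(sphereMeasure N) := by
      congr 1; ext y
      simp only [inner_add_left, inner_sub_left, EuclideanSpace.inner_single_left]
      simp; ring
    rw [h3, integral_const_mul, integral_sub (sph_int N (by fun_prop)) (sph_int N (by fun_prop)),
      h1, h2, norm_add_sq_real, norm_sub_sq_real]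
    simp [EuclideanSpace.inner_single_left, PiLp.single_apply]
    split_ifs <;> ring
  have hs : (N : ℝ) * C = sphereArea N := by
    rw [← int_one]
    have : ∀ y : Sph N, (1 : ℝ) = ∑ i, (y : EuclideanSpace ℝ (Fin N)) i *
      (y : EuclideanSpace ℝ (Fin N)) i := fun y => by
        rw [← sum_sq_sph N y]; simp [sq]
    rw [integral_congr_ae (Filter.Eventually.of_forall this),
      integral_finsetSum _ (fun i _ => sph_int N (by fun_prop))]
    simp [key]
  rw [key, ← hs]
  have : (N : ℝ) ≠ 0 := by norm_cast; omega
  field_simp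

/-- Kronecker delta. -/
def dlt {N : ℕ} (a b : Fin N) : ℝ := if a = b then 1 else 0

lemma inner_single_dlt {N : ℕ} (a b : Fin N) :
    ⟪(EuclideanSpace.single a 1 : EuclideanSpace ℝ (Fin N)), EuclideanSpace.single b 1⟫
      = dlt a b := by
  simp [EuclideanSpace.inner_single_left, PiLp.single_apply, dlt]

lemma dlt_comm {N : ℕ} (a b : Fin N) : dlt a b = dlt b a := by
  simp [dlt, eq_comm]

lemma moment4 (N : ℕ) (hN : 5 ≤ N) (a b c d : Fin N) :
    ∫ y : Sph N, (y : EuclideanSpace ℝ (Fin N)) a * (y : EuclideanSpace ℝ (Fin N)) b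
      * (y : EuclideanSpace ℝ (Fin N)) c * (y : EuclideanSpace ℝ (Fin N)) d
      ∂(sphereMeasure N) = sphereArea N / (N * (N + 2)) *
        (dlt a b * dlt c d + dlt a c * dlt b d + dlt a d * dlt b c) := by
  obtain ⟨C, hC⟩ := pow_moment N hN 4
  have key : ∀ a b c d : Fin N, ∫ y : Sph N, (y : EuclideanSpace ℝ (Fin N)) a *
      (y : EuclideanSpace ℝ (Fin N)) b
      * (y : EuclideanSpace ℝ (Fin N)) c * (y : EuclideanSpace ℝ (Fin N)) d
      ∂(sphereMeasure N) = C / 3 *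
        (dlt a b * dlt c d + dlt a c * dlt b d + dlt a d * dlt b c) := by
    intro a b c d
    set A : EuclideanSpace ℝ (Fin N) := EuclideanSpace.single a 1 with hA
    set B : EuclideanSpace ℝ (Fin N) := EuclideanSpace.single b 1 with hB
    set D : EuclideanSpace ℝ (Fin N) := EuclideanSpace.single c 1 with hD
    set E : EuclideanSpace ℝ (Fin N) := EuclideanSpace.single d 1 with hE
    have hC' : ∀ s t u : ℝ, ∫ y : Sph N, (⟪A + s • B + t • D + u • E,
        (y : EuclideanSpace ℝ (Fin N))⟫) ^ 4 ∂(sphereMeasure N) = C *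
        (1 + s ^ 2 + t ^ 2 + u ^ 2 + 2 * s * dlt a b + 2 * t * dlt a c + 2 * u * dlt a d
          + 2 * s * t * dlt b c + 2 * s * u * dlt b d + 2 * t * u * dlt c d) ^ 2 := by
      intro s t u
      rw [hC]
      have : ‖A + s • B + t • D + u • E‖ ^ 4 = (‖A + s • B + t • D + u • E‖ ^ 2) ^ 2 := by ring
      rw [this, norm_add_sq_real, norm_add_sq_real, norm_add_sq_real]
      simp only [inner_add_left, real_inner_smul_left, real_inner_smul_right, hA, hB, hD, hE,
        inner_single_dlt, norm_smul, mul_pow, Real.norm_eq_abs, sq_abs]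
      simp
      left; ring
    have h3 : ∫ y : Sph N, (y : EuclideanSpace ℝ (Fin N)) a *
      (y : EuclideanSpace ℝ (Fin N)) b
      * (y : EuclideanSpace ℝ (Fin N)) c * (y : EuclideanSpace ℝ (Fin N)) d
      ∂(sphereMeasure N) =
      ∫ y : Sph N, (1/192 : ℝ) * (∑ s ∈ ({1, -1} : Finset ℝ), ∑ t ∈ ({1, -1} : Finset ℝ),
        ∑ u ∈ ({1, -1} : Finset ℝ), (s * t * u) * (⟪A + s • B + t • D + u • E,
        (y : EuclideanSpace ℝ (Fin N))⟫) ^ 4) ∂(sphereMeasure N) := by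
      congr 1; ext y
      have hne : (1 : ℝ) ∉ ({-1} : Finset ℝ) := by norm_num
      simp only [inner_add_left, real_inner_smul_left, hA, hB, hD, hE,
        EuclideanSpace.inner_single_left, Finset.sum_insert hne, Finset.sum_singleton]
      simp; ring
    rw [h3, integral_const_mul, integral_finsetSum _ (fun i _ => sph_int N (by fun_prop))]
    have hin : ∀ s : ℝ, ∫ y : Sph N, (∑ t ∈ ({1, -1} : Finset ℝ),
        ∑ u ∈ ({1, -1} : Finset ℝ), (s * t * u) * (⟪A + s • B + t • D + u • E,
        (y : EuclideanSpace ℝ (Fin N))⟫) ^ 4) ∂(sphereMeasure N) =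
        ∑ t ∈ ({1, -1} : Finset ℝ), ∑ u ∈ ({1, -1} : Finset ℝ), (s * t * u) *
          ∫ y : Sph N, (⟪A + s • B + t • D + u • E,
        (y : EuclideanSpace ℝ (Fin N))⟫) ^ 4 ∂(sphereMeasure N) := by
      intro s
      rw [integral_finsetSum _ (fun i _ => sph_int N (by fun_prop))]
      refine Finset.sum_congr rfl fun t _ => ?_
      rw [integral_finsetSum _ (fun i _ => sph_int N (by fun_prop))]
      refine Finset.sum_congr rfl fun u _ => ?_
      rw [integral_const_mul]
    simp_rw [hin, hC']
    have hne : (1 : ℝ) ∉ ({-1} : Finset ℝ) := by norm_num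
    simp only [Finset.sum_insert hne, Finset.sum_singleton]
    ring
  have hs : (N : ℝ) * (N + 2) * (C / 3) = sphereArea N := by
    rw [← int_one]
    have : ∀ y : Sph N, (1 : ℝ) = ∑ i, ∑ j, (y : EuclideanSpace ℝ (Fin N)) i *
      (y : EuclideanSpace ℝ (Fin N)) i * (y : EuclideanSpace ℝ (Fin N)) j *
      (y : EuclideanSpace ℝ (Fin N)) j := fun y => by
        have h1 : (1 : ℝ) = (∑ i, (y : EuclideanSpace ℝ (Fin N)) i ^ 2) *
          (∑ i, (y : EuclideanSpace ℝ (Fin N)) i ^ 2) := by rw [sum_sq_sph]; norm_num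
        rw [h1, Finset.sum_mul_sum]
        exact Finset.sum_congr rfl fun i _ => Finset.sum_congr rfl fun j _ => by ring
    rw [integral_congr_ae (Filter.Eventually.of_forall this),
      integral_finsetSum _ (fun i _ => sph_int N (by fun_prop))]
    have hin : ∀ i : Fin N, ∫ y : Sph N, ∑ j, (y : EuclideanSpace ℝ (Fin N)) i *
      (y : EuclideanSpace ℝ (Fin N)) i * (y : EuclideanSpace ℝ (Fin N)) j *
      (y : EuclideanSpace ℝ (Fin N)) j ∂(sphereMeasure N) = ∑ j, C / 3 *
        (dlt i i * dlt j j + dlt i j * dlt i j + dlt i j * dlt i j) := by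
      intro i
      rw [integral_finsetSum _ (fun i _ => sph_int N (by fun_prop))]
      exact Finset.sum_congr rfl fun j _ => key i i j j
    simp_rw [hin, ← Finset.mul_sum]
    simp [dlt, Finset.sum_add_distrib]
    ring
  rw [key, ← hs]
  have : (N : ℝ) ≠ 0 := by norm_cast; omega
  have : (N : ℝ) + 2 ≠ 0 := by positivity
  field_simp

lemma pd_Hmat (N : ℕ) (W : Fin N → Fin N → Fin N → Fin N → ℝ) (i j q : Fin N) :
    pd N q (Hmat N W i j) = fun y => ∑ k, (W i k j q + W i q j k) * y k := by
  ext y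
  unfold pd
  have hc : ∀ p : Fin N, HasFDerivAt (fun y : EuclideanSpace ℝ (Fin N) => y p)
    (EuclideanSpace.proj p : EuclideanSpace ℝ (Fin N) →L[ℝ] ℝ) y := fun p =>
      (EuclideanSpace.proj p : EuclideanSpace ℝ (Fin N) →L[ℝ] ℝ).hasFDerivAt
  have h : HasFDerivAt (Hmat N W i j) _ y :=
    HasFDerivAt.fun_sum (u := Finset.univ) fun p _ =>
      HasFDerivAt.fun_sum (u := Finset.univ) fun r _ =>
        ((hc p).const_mul (W i p j r)).mul (hc r)
  rw [h.fderiv]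
  simp [PiLp.single_apply, Finset.sum_add_distrib, add_mul, mul_comm]

lemma pd_lin (N : ℕ) (c : Fin N → ℝ) (q : Fin N) :
    pd N q (fun y => ∑ k, c k * y k) = fun _ => c q := by
  ext y
  unfold pd
  have hc : ∀ p : Fin N, HasFDerivAt (fun y : EuclideanSpace ℝ (Fin N) => y p)
    (EuclideanSpace.proj p : EuclideanSpace ℝ (Fin N) →L[ℝ] ℝ) y := fun p =>
      (EuclideanSpace.proj p : EuclideanSpace ℝ (Fin N) →L[ℝ] ℝ).hasFDerivAt
  have h : HasFDerivAt (fun y : EuclideanSpace ℝ (Fin N) => ∑ k, c k * y k) _ y :=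
    HasFDerivAt.fun_sum (u := Finset.univ) fun p _ => (hc p).const_mul (c p)
  rw [h.fderiv]
  simp [PiLp.single_apply]

theorem stmt_7 (N : ℕ) (hN : 5 ≤ N)
    (W : Fin N → Fin N → Fin N → Fin N → ℝ)
    (hW1 : ∀ i p j q, W i p j q = - W p i j q)
    (hW2 : ∀ i p j q, W i p j q = - W i p q j)
    (hW3 : ∀ i p j q, W i p j q = W j q i p)
    (hBianchi : ∀ i p j q, W i p j q + W i j q p + W i q p j = 0)
    (hTrace : ∀ p q, ∑ i : Fin N, W i p i q = 0) :
    ∀ p q : Fin N,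
    (∫ y : Metric.sphere (0 : EuclideanSpace ℝ (Fin N)) 1,
        (∑ i : Fin N, ∑ j : Fin N, Hmat N W i j ↑y * pd N q (Hmat N W i j) ↑y)
          * ((y : EuclideanSpace ℝ (Fin N)) p) ∂(sphereMeasure N)
      = sphereArea N / (N * (N + 2))
          * ∑ i : Fin N, ∑ j : Fin N, ∑ k : Fin N,
              (W i k j p + W i p j k) * (W i k j q + W i q j k)) ∧
    (∫ y : Metric.sphere (0 : EuclideanSpace ℝ (Fin N)) 1,
        (∑ i : Fin N, ∑ j : Fin N, ∑ k : Fin N, ∑ l : Fin N,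
          (pd N k (pd N l (Hmat N W i j)) ↑y) ^ 2)
          * ((y : EuclideanSpace ℝ (Fin N)) p) * ((y : EuclideanSpace ℝ (Fin N)) q)
          ∂(sphereMeasure N)
      = sphereArea N / N
          * (∑ i : Fin N, ∑ j : Fin N, ∑ k : Fin N, ∑ l : Fin N,
              (W i k j l + W i l j k) ^ 2)
          * (if p = q then (1 : ℝ) else 0)) := by
  intro p q
  constructor
  · have htr : ∀ i j, ∑ a, W i a j a = 0 := fun i j => by
      rw [← hTrace i j]
      refine Finset.sum_congr rfl fun a _ => ?_
      rw [hW1, hW2, neg_neg]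
    have hint : ∀ y : Sph N, (∑ i : Fin N, ∑ j : Fin N, Hmat N W i j ↑y *
        pd N q (Hmat N W i j) ↑y) * ((y : EuclideanSpace ℝ (Fin N)) p) =
        ∑ i : Fin N, ∑ j : Fin N, ∑ k : Fin N, ∑ a : Fin N, ∑ b : Fin N,
          (W i a j b * (W i k j q + W i q j k)) *
          ((y : EuclideanSpace ℝ (Fin N)) a * (y : EuclideanSpace ℝ (Fin N)) b
          * (y : EuclideanSpace ℝ (Fin N)) k * (y : EuclideanSpace ℝ (Fin N)) p) := by
      intro y
      simp only [pd_Hmat, Hmat]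
      simp only [Finset.sum_mul]
      refine Finset.sum_congr rfl fun i _ => Finset.sum_congr rfl fun j _ => ?_
      simp only [Finset.mul_sum, Finset.sum_mul]
      conv_rhs => rw [Finset.sum_comm]
      refine Finset.sum_congr rfl fun a _ => ?_
      conv_rhs => rw [Finset.sum_comm]
      refine Finset.sum_congr rfl fun b _ => ?_
      refine Finset.sum_congr rfl fun k _ => ?_
      ring
    rw [integral_congr_ae (Filter.Eventually.of_forall hint),
      integral_finsetSum _ (fun i _ => sph_int N (by fun_prop))]
    rw [Finset.mul_sum]
    refine Finset.sum_congr rfl fun i _ => ?_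
    rw [Finset.mul_sum, integral_finsetSum _ (fun i _ => sph_int N (by fun_prop))]
    refine Finset.sum_congr rfl fun j _ => ?_
    rw [Finset.mul_sum, integral_finsetSum _ (fun i _ => sph_int N (by fun_prop))]
    refine Finset.sum_congr rfl fun k _ => ?_
    rw [integral_finsetSum _ (fun i _ => sph_int N (by fun_prop))]
    have hin : ∀ a : Fin N, ∫ y : Sph N, ∑ b : Fin N,
          (W i a j b * (W i k j q + W i q j k)) *
          ((y : EuclideanSpace ℝ (Fin N)) a * (y : EuclideanSpace ℝ (Fin N)) b
          * (y : EuclideanSpace ℝ (Fin N)) k * (y : EuclideanSpace ℝ (Fin N)) p)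
          ∂(sphereMeasure N) = ∑ b : Fin N,
          (W i a j b * (W i k j q + W i q j k)) * (sphereArea N / (N * (N + 2)) *
        (dlt a b * dlt k p + dlt a k * dlt b p + dlt a p * dlt b k)) := by
      intro a
      rw [integral_finsetSum _ (fun i _ => sph_int N (by fun_prop))]
      refine Finset.sum_congr rfl fun b _ => ?_
      rw [integral_const_mul, moment4 N hN]
    simp_rw [hin]
    have h1 : ∀ a b : Fin N, W i a j b * (W i k j q + W i q j k) * (sphereArea N / (N * (N + 2)) *
        (dlt a b * dlt k p + dlt a k * dlt b p + dlt a p * dlt b k)) =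
        sphereArea N / (N * (N + 2)) * (W i k j q + W i q j k) *
        (W i a j b * dlt a b * dlt k p + W i a j b * dlt a k * dlt b p
          + W i a j b * dlt a p * dlt b k) := fun a b => by ring
    simp_rw [h1, ← Finset.mul_sum]
    simp only [Finset.sum_add_distrib, ← Finset.sum_mul]
    simp [dlt, htr]
    ring
  · simp only [pd_Hmat, pd_lin]
    simp only [mul_assoc]
    rw [integral_const_mul, moment2 N hN]
    ring
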